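/- arXiv:1408.2243 — 5 statements merged into one kernel-verified Lean document; each statement's English description precedes it below -/
import Mathlib

section
/- There exists a unique p₀ ∈ (1/2, 1) such that 2/π − ((1/(3p₀²))·cos(p₀π/2) + 1 − 1/(3p₀²)) = 0; moreover for p ∈ (0, p₀) the quantity 2/π − ((1/(3p²))·cos(pπ/2) + 1 − 1/(3p²)) is positive and for p ∈ (p₀, 1) it is negative. -/
open Real

/-!
By the half-angle formula `1 - cos (pπ/2) = 2 sin² (pπ/4)`, the quantity in question equals
`2/π - 1 + (π²/24) sinc² (pπ/4)`. On `[0, π]` the function `sinc` is strictly decreasing, as the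
slope of a chord from the origin of the strictly concave function `sin`, and beyond `π` it is too
small in absolute value to matter. Hence the quantity at any `p ∈ (0, 2]` strictly exceeds its value
at every `q > p`. It changes sign between `1/2` and `1`, so its zero there is its only sign change
on `(0, ∞)`.
-/

lemma strictAntiOn_sinc : StrictAntiOn sinc (Set.Icc 0 π) := by
  rintro x ⟨hx0, -⟩ y ⟨hy0, hyπ⟩ hxy
  have hy : 0 < y := hx0.trans_lt hxy
  rw [sinc_of_ne_zero hy.ne']
  rcases hx0.eq_or_lt with rfl | hx
  · rw [sinc_zero, div_lt_one hy]
    exact sin_lt hy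
  · rw [sinc_of_ne_zero hx.ne']
    simpa using strictConcaveOn_sin_Icc.secant_strict_mono ⟨le_rfl, pi_pos.le⟩
      ⟨hx.le, hxy.le.trans hyπ⟩ ⟨hy0, hyπ⟩ hx.ne' hy.ne' hxy

lemma sinc_nonneg {x : ℝ} (hx0 : 0 ≤ x) (hxπ : x ≤ π) : 0 ≤ sinc x := by
  rcases hx0.eq_or_lt with rfl | hx
  · simp
  · rw [sinc_of_ne_zero hx.ne']
    exact div_nonneg (sin_nonneg_of_nonneg_of_le_pi hx0 hxπ) hx0

lemma two_div_pi_le_sinc {x : ℝ} (hx0 : 0 ≤ x) (hxπ : x ≤ π / 2) : 2 / π ≤ sinc x := by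
  have hsinc : sinc (π / 2) = 2 / π := by
    rw [sinc_of_ne_zero (by positivity), sin_pi_div_two, one_div_div]
  rw [← hsinc]
  exact strictAntiOn_sinc.antitoneOn ⟨hx0, by linarith [pi_pos]⟩
    ⟨by positivity, by linarith [pi_pos]⟩ hxπ

lemma abs_sinc_le_inv_abs {x : ℝ} (hx : x ≠ 0) : |sinc x| ≤ |x|⁻¹ := by
  rw [sinc_of_ne_zero hx, abs_div, div_eq_mul_inv]
  exact mul_le_of_le_one_left (by positivity) (abs_sin_le_one x)

lemma abs_sinc_lt_sinc {x y : ℝ} (hx0 : 0 ≤ x) (hxπ : x ≤ π / 2) (hxy : x < y) :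
    |sinc y| < sinc x := by
  rcases le_total y π with hyπ | hπy
  · have hy0 : 0 ≤ y := hx0.trans hxy.le
    rw [abs_of_nonneg (sinc_nonneg hy0 hyπ)]
    exact strictAntiOn_sinc ⟨hx0, hxy.le.trans hyπ⟩ ⟨hy0, hyπ⟩ hxy
  · have hy : 0 < y := pi_pos.trans_le hπy
    calc |sinc y| ≤ |y|⁻¹ := abs_sinc_le_inv_abs hy.ne'
      _ = 1 / y := by rw [abs_of_pos hy, one_div]
      _ ≤ 1 / π := by gcongr
      _ < 2 / π := by gcongr; norm_num
      _ ≤ sinc x := two_div_pi_le_sinc hx0 hxπ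

lemma one_sub_cos_eq_sinc_sq (x : ℝ) : 1 - cos x = x ^ 2 / 2 * sinc (x / 2) ^ 2 := by
  rcases eq_or_ne x 0 with rfl | hx
  · simp
  · have hsin : sin (x / 2) ^ 2 = 1 / 2 - cos x / 2 := by
      rw [sin_sq_eq_half_sub, mul_div_cancel₀ x two_ne_zero]
    rw [sinc_of_ne_zero (by positivity), div_pow, hsin]
    field_simp

/-- The value at `x = π / 2` of `sin x / x` minus its approximation
`cos (p x) / (3 p²) + 1 - 1 / (3 p²)`, which agrees with it to second order at `x = 0`. At `p = 0`
division by zero gives the junk value `2 / π - 1`. -/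
noncomputable def sincGap (p : ℝ) : ℝ :=
  2 / π - (1 / (3 * p ^ 2) * cos (p * π / 2) + 1 - 1 / (3 * p ^ 2))

lemma sincGap_eq_sinc_sq {p : ℝ} (hp : p ≠ 0) :
    sincGap p = 2 / π - 1 + π ^ 2 / 24 * sinc (p * π / 4) ^ 2 :=
  calc sincGap p = 2 / π - 1 + 1 / (3 * p ^ 2) * (1 - cos (p * π / 2)) := by
        unfold sincGap; ring
    _ = 2 / π - 1 + 1 / (3 * p ^ 2) * ((p * π / 2) ^ 2 / 2 * sinc (p * π / 4) ^ 2) := by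
        rw [one_sub_cos_eq_sinc_sq, div_div, show (2 * 2 : ℝ) = 4 by norm_num]
    _ = 2 / π - 1 + π ^ 2 / 24 * sinc (p * π / 4) ^ 2 := by
        field_simp
        ring

lemma sincGap_lt_sincGap {p q : ℝ} (hp0 : 0 < p) (hp2 : p ≤ 2) (hpq : p < q) :
    sincGap q < sincGap p := by
  rw [sincGap_eq_sinc_sq hp0.ne', sincGap_eq_sinc_sq (hp0.trans hpq).ne']
  have hsinc : |sinc (q * π / 4)| < sinc (p * π / 4) :=
    abs_sinc_lt_sinc (by positivity) (by nlinarith [pi_pos]) (by gcongr)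
  have hsq : sinc (q * π / 4) ^ 2 < sinc (p * π / 4) ^ 2 :=
    sq_lt_sq.2 (hsinc.trans_le (le_abs_self _))
  gcongr

lemma continuousOn_sincGap : ContinuousOn sincGap {0}ᶜ := by
  have hcont : Continuous fun p : ℝ ↦ 2 / π - 1 + π ^ 2 / 24 * sinc (p * π / 4) ^ 2 := by
    fun_prop
  exact hcont.continuousOn.congr fun p hp ↦ sincGap_eq_sinc_sq hp

lemma sincGap_one_half_pos : 0 < sincGap (1 / 2) := by
  have hgap : sincGap (1 / 2) = 2 / π + 1 / 3 - 2 / 3 * √2 := by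
    rw [sincGap, show 1 / 2 * π / 2 = π / 4 by ring, cos_pi_div_four]
    ring
  have hπ : (2 : ℝ) / 3.15 < 2 / π := by
    gcongr
    exact pi_lt_d2
  have hsqrt : √2 < 1.415 := by
    rw [sqrt_lt' (by norm_num)]
    norm_num
  rw [hgap]
  norm_num at hπ hsqrt
  linarith

lemma sincGap_one_neg : sincGap 1 < 0 := by
  have hgap : sincGap 1 = 2 / π - 2 / 3 := by
    rw [sincGap, one_mul, cos_pi_div_two]
    ring
  rw [hgap, sub_neg]
  gcongr
  exact pi_gt_three

lemma exists_sincGap_eq_zero : ∃ p ∈ Set.Ioo (1 / 2 : ℝ) 1, sincGap p = 0 := by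
  have hsubset : Set.Icc (1 / 2 : ℝ) 1 ⊆ {0}ᶜ := fun p hp ↦ by
    have : 0 < p := one_half_pos.trans_le hp.1
    exact this.ne'
  exact intermediate_value_Ioo' (by norm_num) (continuousOn_sincGap.mono hsubset)
    ⟨sincGap_one_neg, sincGap_one_half_pos⟩

theorem stmt_6_general :
    ∃ p₀ ∈ Set.Ioo (1 / 2 : ℝ) 1,
      sincGap p₀ = 0 ∧
      (∀ p > 0, sincGap p = 0 → p = p₀) ∧
      (∀ p ∈ Set.Ioo 0 p₀, 0 < sincGap p) ∧
      (∀ p > p₀, sincGap p < 0) := by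
  obtain ⟨p₀, hp₀, hzero⟩ := exists_sincGap_eq_zero
  have hpos : ∀ p ∈ Set.Ioo 0 p₀, 0 < sincGap p := fun p hp ↦
    hzero ▸ sincGap_lt_sincGap hp.1 (by linarith [hp.2, hp₀.2]) hp.2
  have hneg : ∀ p > p₀, sincGap p < 0 := fun p hp ↦
    hzero ▸ sincGap_lt_sincGap (by linarith [hp₀.1]) (by linarith [hp₀.2]) hp
  refine ⟨p₀, hp₀, hzero, fun p hp h ↦ ?_, hpos, hneg⟩
  rcases lt_trichotomy p p₀ with hlt | heq | hgt
  · exact absurd h (hpos p ⟨hp, hlt⟩).ne'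
  · exact heq
  · exact absurd h (hneg p hgt).ne

/-- There is a unique `p₀ ∈ (1/2, 1)` with
`2/π − ((1/(3p₀²))·cos(p₀π/2) + 1 − 1/(3p₀²)) = 0`; moreover this quantity is
positive for `p ∈ (0, p₀)` and negative for `p ∈ (p₀, 1)`. -/
theorem stmt_6 :
    ∃ p₀ ∈ Set.Ioo (1 / 2 : ℝ) 1,
      (2 / π - (1 / (3 * p₀ ^ 2) * Real.cos (p₀ * π / 2) + 1 - 1 / (3 * p₀ ^ 2)) = 0) ∧
      (∀ p ∈ Set.Ioo (1 / 2 : ℝ) 1,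
        2 / π - (1 / (3 * p ^ 2) * Real.cos (p * π / 2) + 1 - 1 / (3 * p ^ 2)) = 0 → p = p₀) ∧
      (∀ p ∈ Set.Ioo (0 : ℝ) p₀,
        0 < 2 / π - (1 / (3 * p ^ 2) * Real.cos (p * π / 2) + 1 - 1 / (3 * p ^ 2))) ∧
      (∀ p ∈ Set.Ioo p₀ (1 : ℝ),
        2 / π - (1 / (3 * p ^ 2) * Real.cos (p * π / 2) + 1 - 1 / (3 * p ^ 2)) < 0) := by
  obtain ⟨p₀, hp₀, hzero, hunique, hpos, hneg⟩ := stmt_6_general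
  exact ⟨p₀, hp₀, hzero, fun p hp ↦ hunique p (one_half_pos.trans hp.1), hpos,
    fun p hp ↦ hneg p hp.1⟩
end

section
/- For every x > 0, the chain of inequalities cosh(x/√3) < (3/4)·cosh(2x/3) + 1/4 < (2/3)·cosh(x/√2) + 1/3 < (16/27)·cosh(3x/4) + 11/27 < (5/9)·cosh(√15·x/5) + 4/9 < sinh(x)/x < (1/3)·cosh(x) + 2/3 < (1/2)·cosh²(x/√3) + 1/2 holds. -/
/-!
Every member of the chain other than `sinh x / x` is the approximation
`(cosh (p * x) - 1) / (3 * p ^ 2) + 1` of `sinh x / x`, for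
`p = 1/√3, 2/3, 1/√2, 3/4, √15/5, 1, 2/√3` in turn. In units of `x ^ (2n+2) / (2n+2)!` its Taylor
coefficients are `p ^ (2n) / 3`, while those of `sinh x / x` are `1 / (2n+3)`, so every inequality
holds coefficientwise. The value `p ^ 2 = 3/5` is where the coefficients of `x ^ 4` agree; beyond
that order the comparison with `sinh x / x` is Bernoulli's inequality for `(1 + 2/3) ^ n`.
-/

open Real
open scoped Nat

/-- The combination of `1` and `cosh (p * x)` that agrees with `sinh x / x` up to `O(x ^ 4)`;
the members of the chain are its values at particular `p`. Meaningful for `p ≠ 0` only: at `p = 0`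
the division by zero yields `1` in place of the limit `1 + x ^ 2 / 6`. -/
noncomputable def sinhDivApprox (p x : ℝ) : ℝ := (cosh (p * x) - 1) / (3 * p ^ 2) + 1

theorem hasSum_mul_right_lt {ι : Type*} {a b t : ι → ℝ} {A B : ℝ} (ht : ∀ n, 0 < t n)
    (hab : ∀ n, a n ≤ b n) {i : ι} (hi : a i < b i)
    (hA : HasSum (fun n ↦ a n * t n) A) (hB : HasSum (fun n ↦ b n * t n) B) : A < B :=
  hasSum_lt (fun n ↦ mul_le_mul_of_nonneg_right (hab n) (ht n).le)
    (mul_lt_mul_of_pos_right hi (ht i)) hA hB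

section

variable {p q x : ℝ}

theorem hasSum_sinhDivApprox_sub_one (hp : p ≠ 0) (x : ℝ) :
    HasSum (fun n : ℕ ↦ (p ^ 2) ^ n / 3 * ((x ^ 2) ^ (n + 1) / (2 * (n + 1))!))
      (sinhDivApprox p x - 1) := by
  have hcosh : HasSum (fun n : ℕ ↦ (p * x) ^ (2 * (n + 1)) / (2 * (n + 1))!)
      (cosh (p * x) - 1) := by
    simpa using (hasSum_nat_add_iff' 1).2 (hasSum_cosh (p * x))
  rw [sinhDivApprox, add_sub_cancel_right]
  have term_eq (n : ℕ) : (p ^ 2) ^ n / 3 * ((x ^ 2) ^ (n + 1) / (2 * (n + 1))!) =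
      (p * x) ^ (2 * (n + 1)) / (2 * (n + 1))! / (3 * p ^ 2) := by
    rw [pow_mul, mul_pow, mul_pow, pow_succ (p ^ 2)]
    field_simp
  simpa only [term_eq] using hcosh.div_const (3 * p ^ 2)

theorem hasSum_sinh_div_self_sub_one (hx : x ≠ 0) :
    HasSum (fun n : ℕ ↦ 1 / (2 * n + 3) * ((x ^ 2) ^ (n + 1) / (2 * (n + 1))!))
      (sinh x / x - 1) := by
  have hsinh : HasSum (fun n : ℕ ↦ x ^ (2 * (n + 1) + 1) / (2 * (n + 1) + 1)! / x)
      (sinh x / x - 1) := by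
    simpa [hx] using (hasSum_nat_add_iff' 1).2 ((hasSum_sinh x).div_const x)
  convert hsinh using 2 with n
  rw [pow_succ x (2 * (n + 1)), pow_mul, Nat.factorial_succ (2 * (n + 1))]
  push_cast
  field_simp
  ring

theorem sinhDivApprox_lt_sinhDivApprox (hp : p ≠ 0) (hpq : p ^ 2 < q ^ 2) (hx : x ≠ 0) :
    sinhDivApprox p x < sinhDivApprox q x := by
  have hq : q ≠ 0 := sq_pos_iff.1 ((sq_nonneg p).trans_lt hpq)
  refine (sub_lt_sub_iff_right 1).1 <| hasSum_mul_right_lt (i := 1) (fun n ↦ by positivity)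
    (fun n ↦ ?_) ?_ (hasSum_sinhDivApprox_sub_one hp x) (hasSum_sinhDivApprox_sub_one hq x)
  · gcongr
  · simpa only [pow_one] using div_lt_div_of_pos_right hpq three_pos

theorem three_fifths_pow_div_three_le (n : ℕ) : (3 / 5 : ℝ) ^ n / 3 ≤ 1 / (2 * n + 3) := by
  have bernoulli : 1 + n * (2 / 3 : ℝ) ≤ (1 + 2 / 3) ^ n :=
    one_add_mul_le_pow (by norm_num) n
  calc (3 / 5 : ℝ) ^ n / 3 = 1 / (3 * (1 + 2 / 3) ^ n) := by
        rw [show (3 / 5 : ℝ) = (1 + 2 / 3)⁻¹ by norm_num, inv_pow]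
        field_simp
    _ ≤ 1 / (2 * n + 3) := one_div_le_one_div_of_le (by positivity) (by linarith)

theorem sinhDivApprox_lt_sinh_div_self (hp : p ≠ 0) (hp_le : p ^ 2 ≤ 3 / 5) (hx : x ≠ 0) :
    sinhDivApprox p x < sinh x / x := by
  have coeff_le (n : ℕ) : (p ^ 2) ^ n / 3 ≤ (3 / 5) ^ n / 3 := by gcongr
  refine (sub_lt_sub_iff_right 1).1 <| hasSum_mul_right_lt (i := 2) (fun n ↦ by positivity)
    (fun n ↦ (coeff_le n).trans (three_fifths_pow_div_three_le n)) ?_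
    (hasSum_sinhDivApprox_sub_one hp x) (hasSum_sinh_div_self_sub_one hx)
  exact (coeff_le 2).trans_lt (by norm_num)

theorem sinh_div_self_lt_sinhDivApprox (hp : 1 ≤ p ^ 2) (hx : x ≠ 0) :
    sinh x / x < sinhDivApprox p x := by
  have hp₀ : p ≠ 0 := sq_pos_iff.1 (one_pos.trans_le hp)
  have coeff_ge (n : ℕ) : 1 / 3 ≤ (p ^ 2) ^ n / 3 := by
    gcongr
    exact one_le_pow₀ hp
  refine (sub_lt_sub_iff_right 1).1 <| hasSum_mul_right_lt (i := 1) (fun n ↦ by positivity)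
    (fun n ↦ ?_) ?_ (hasSum_sinh_div_self_sub_one hx) (hasSum_sinhDivApprox_sub_one hp₀ x)
  · exact (one_div_le_one_div_of_le three_pos (by simp)).trans (coeff_ge n)
  · exact lt_of_lt_of_le (by norm_num) (coeff_ge 1)

end

section

variable (x : ℝ)

theorem sinhDivApprox_one_div_sqrt_three : sinhDivApprox (1 / √3) x = cosh (x / √3) := by
  simp [sinhDivApprox, div_eq_inv_mul]

theorem sinhDivApprox_two_thirds :
    sinhDivApprox (2 / 3) x = 3 / 4 * cosh (2 * x / 3) + 1 / 4 := by
  rw [sinhDivApprox, div_mul_eq_mul_div]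
  ring

theorem sinhDivApprox_one_div_sqrt_two :
    sinhDivApprox (1 / √2) x = 2 / 3 * cosh (x / √2) + 1 / 3 := by
  rw [sinhDivApprox, one_div_mul_eq_div, div_pow, sq_sqrt zero_le_two]
  ring

theorem sinhDivApprox_three_fourths :
    sinhDivApprox (3 / 4) x = 16 / 27 * cosh (3 * x / 4) + 11 / 27 := by
  rw [sinhDivApprox, div_mul_eq_mul_div]
  ring

theorem sinhDivApprox_sqrt_fifteen_div_five :
    sinhDivApprox (√15 / 5) x = 5 / 9 * cosh (√15 * x / 5) + 4 / 9 := by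
  rw [sinhDivApprox, div_mul_eq_mul_div, div_pow, sq_sqrt (by norm_num)]
  ring

theorem sinhDivApprox_one : sinhDivApprox 1 x = 1 / 3 * cosh x + 2 / 3 := by
  rw [sinhDivApprox, one_mul]
  ring

theorem sinhDivApprox_two_div_sqrt_three :
    sinhDivApprox (2 / √3) x = 1 / 2 * cosh (x / √3) ^ 2 + 1 / 2 := by
  rw [sinhDivApprox, div_mul_eq_mul_div, mul_div_assoc, cosh_two_mul, sinh_sq, div_pow,
    sq_sqrt zero_le_three]
  ring

end

/-- For `x > 0`, the chain of inequalities
`cosh(x/√3) < (3/4)cosh(2x/3) + 1/4 < (2/3)cosh(x/√2) + 1/3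
 < (16/27)cosh(3x/4) + 11/27 < (5/9)cosh(√15 x/5) + 4/9 < sinh x / x
 < (1/3)cosh x + 2/3 < (1/2)cosh²(x/√3) + 1/2`. -/
theorem stmt_12 (x : ℝ) (hx : 0 < x) :
    Real.cosh (x / Real.sqrt 3) < 3 / 4 * Real.cosh (2 * x / 3) + 1 / 4 ∧
    3 / 4 * Real.cosh (2 * x / 3) + 1 / 4 < 2 / 3 * Real.cosh (x / Real.sqrt 2) + 1 / 3 ∧
    2 / 3 * Real.cosh (x / Real.sqrt 2) + 1 / 3 < 16 / 27 * Real.cosh (3 * x / 4) + 11 / 27 ∧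
    16 / 27 * Real.cosh (3 * x / 4) + 11 / 27 < 5 / 9 * Real.cosh (Real.sqrt 15 * x / 5) + 4 / 9 ∧
    5 / 9 * Real.cosh (Real.sqrt 15 * x / 5) + 4 / 9 < Real.sinh x / x ∧
    Real.sinh x / x < 1 / 3 * Real.cosh x + 2 / 3 ∧
    1 / 3 * Real.cosh x + 2 / 3 < 1 / 2 * Real.cosh (x / Real.sqrt 3) ^ 2 + 1 / 2 := by
  have h₃ : √3 ^ 2 = 3 := sq_sqrt (by norm_num)
  have h₂ : √2 ^ 2 = 2 := sq_sqrt (by norm_num)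
  have h₁₅ : √15 ^ 2 = 15 := sq_sqrt (by norm_num)
  have mono {p q : ℝ} (hp : p ≠ 0) (hpq : p ^ 2 < q ^ 2) :
      sinhDivApprox p x < sinhDivApprox q x := sinhDivApprox_lt_sinhDivApprox hp hpq hx.ne'
  rw [← sinhDivApprox_two_div_sqrt_three, ← sinhDivApprox_one_div_sqrt_three,
    ← sinhDivApprox_two_thirds, ← sinhDivApprox_one_div_sqrt_two, ← sinhDivApprox_three_fourths,
    ← sinhDivApprox_sqrt_fifteen_div_five, ← sinhDivApprox_one]
  refine ⟨mono ?_ ?_, mono ?_ ?_, mono ?_ ?_, mono ?_ ?_,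
    sinhDivApprox_lt_sinh_div_self ?_ ?_ hx.ne', sinh_div_self_lt_sinhDivApprox ?_ hx.ne',
    mono ?_ ?_⟩
  all_goals norm_num [div_pow, h₃, h₂, h₁₅]
end

section
/- Let p ∈ (0, √15/5], set c₀(p) = (π/2)⁻⁴·(2/π − ((1/(3p²))·cos(pπ/2) + 1 − 1/(3p²))) and c₁(p) = (3 − 5p²)/360. Then for every x ∈ (0, π/2), ((1/(3p²))·cos(px) + 1 − 1/(3p²)) + c₀(p)·x⁴ < sin(x)/x < ((1/(3p²))·cos(px) + 1 − 1/(3p²)) + c₁(p)·x⁴. -/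
open Real

/-!
Write `C x = cos (p x) / (3 p²) + 1 - 1 / (3 p²)`, which agrees with `sin x / x` up to order
three. Expanding both in power series, `(sin x / x - C x) / x⁴ = ∑ (-1)ᵏ aₖ (x²)ᵏ` with
`aₖ = (1 - (2k+5) p^(2k+2) / 3) / (2k+5)!`. From `k = 1` on the coefficients are positive and decay
so fast that, for `y < z`, the series of differences `∑ (-1)ᵏ aₖ₊₁ (zᵏ⁺¹ - yᵏ⁺¹)` is alternating
with strictly decreasing terms. Hence the quotient strictly decreases in `x`, and the two constants
are its values at the right endpoint and, as the sum of the series, at `0`.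
-/

lemma pos_of_hasSum_alternating {b : ℕ → ℝ} {s : ℝ} (hb : StrictAnti b)
    (hs : HasSum (fun k ↦ (-1) ^ k * b k) s) : 0 < s := by
  have partial_sum_le : b 0 - b 1 ≤ s := by
    simpa [Finset.sum_range_succ, sub_eq_add_neg] using
      hb.antitone.alternating_series_le_tendsto hs.tendsto_sum_nat 1
  linarith [hb zero_lt_one]

lemma pow_sub_pow_le_add_mul {y z : ℝ} (hy : 0 ≤ y) (hyz : y ≤ z) (k : ℕ) :
    z ^ (k + 2) - y ^ (k + 2) ≤ (y + z) * (z ^ (k + 1) - y ^ (k + 1)) := by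
  have cross_nonneg : 0 ≤ y * z * (z ^ k - y ^ k) :=
    mul_nonneg (mul_nonneg hy (hy.trans hyz)) (sub_nonneg.2 (pow_le_pow_left₀ hy hyz k))
  linear_combination cross_nonneg

section AlternatingPowerSeries

variable {a : ℕ → ℝ} {R : ℝ}

lemma summable_alternating_pow (ha_pos : ∀ k, 0 < a (k + 1))
    (ha_ratio : ∀ k, 2 * R * a (k + 2) ≤ a (k + 1)) {y : ℝ} (hy : y ∈ Set.Icc 0 R) :
    Summable (fun k ↦ (-1) ^ k * a k * y ^ k) := by
  refine summable_of_ratio_norm_eventually_le (r := 1 / 2) (by norm_num) ?_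
  filter_upwards [Filter.eventually_ge_atTop 1] with n hn
  obtain ⟨k, rfl⟩ := Nat.exists_eq_add_of_le' hn
  have halving : y * a (k + 2) ≤ 1 / 2 * a (k + 1) := by
    nlinarith [ha_ratio k, mul_le_mul_of_nonneg_right hy.2 (ha_pos (k + 1)).le]
  simp only [norm_mul, norm_pow, norm_neg, norm_one, one_pow, one_mul,
    Real.norm_of_nonneg hy.1, Real.norm_of_nonneg (ha_pos _).le]
  calc a (k + 2) * y ^ (k + 2) = y * a (k + 2) * y ^ (k + 1) := by ring
    _ ≤ 1 / 2 * a (k + 1) * y ^ (k + 1) :=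
      mul_le_mul_of_nonneg_right halving (pow_nonneg hy.1 _)
    _ = 1 / 2 * (a (k + 1) * y ^ (k + 1)) := mul_assoc _ _ _

lemma strictAnti_mul_pow_sub_pow (ha_pos : ∀ k, 0 < a (k + 1))
    (ha_ratio : ∀ k, 2 * R * a (k + 2) ≤ a (k + 1)) {y z : ℝ} (hy : 0 ≤ y) (hyz : y < z)
    (hz : z ≤ R) :
    StrictAnti (fun k ↦ a (k + 1) * (z ^ (k + 1) - y ^ (k + 1))) := by
  refine strictAnti_nat_of_succ_lt fun k ↦ ?_
  have diff_pos : 0 < z ^ (k + 1) - y ^ (k + 1) :=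
    sub_pos.2 (pow_lt_pow_left₀ hyz hy k.succ_ne_zero)
  have coeff_pos : 0 < a (k + 2) := ha_pos (k + 1)
  calc a (k + 2) * (z ^ (k + 2) - y ^ (k + 2))
      ≤ a (k + 2) * ((y + z) * (z ^ (k + 1) - y ^ (k + 1))) := by
        gcongr
        exact pow_sub_pow_le_add_mul hy hyz.le k
    _ < a (k + 2) * (2 * R * (z ^ (k + 1) - y ^ (k + 1))) := by
        gcongr
        linarith
    _ = 2 * R * a (k + 2) * (z ^ (k + 1) - y ^ (k + 1)) := by ring
    _ ≤ a (k + 1) * (z ^ (k + 1) - y ^ (k + 1)) := by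
        gcongr
        exact ha_ratio k

lemma strictAntiOn_tsum_alternating_pow (ha_pos : ∀ k, 0 < a (k + 1))
    (ha_ratio : ∀ k, 2 * R * a (k + 2) ≤ a (k + 1)) :
    StrictAntiOn (fun y ↦ ∑' k, (-1) ^ k * a k * y ^ k) (Set.Icc 0 R) := by
  intro y hy z hz hyz
  have hasSum_sub := (summable_alternating_pow ha_pos ha_ratio hy).hasSum.sub
    (summable_alternating_pow ha_pos ha_ratio hz).hasSum
  have hasSum_tail := (hasSum_nat_add_iff' 1).2 hasSum_sub
  simp only [Finset.sum_range_one, pow_zero, sub_self, sub_zero] at hasSum_tail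
  refine sub_pos.1 (pos_of_hasSum_alternating
    (strictAnti_mul_pow_sub_pow ha_pos ha_ratio hy.1 hyz hz.2) ?_)
  exact hasSum_tail.congr_fun fun k ↦ by ring

end AlternatingPowerSeries

/-- The approximation `cos (p x) / (3 p²) + 1 - 1 / (3 p²)` of `sin x / x`; the weight of the cosine
makes the coefficients of `x²` agree. -/
noncomputable def cosApprox (p x : ℝ) : ℝ :=
  1 / (3 * p ^ 2) * cos (p * x) + 1 - 1 / (3 * p ^ 2)

/-- The coefficient of `(-1)ᵏ x ^ (2 * k)` in the power series of
`(sin x / x - cosApprox p x) / x ^ 4`, as a function of `q = p ^ 2`. -/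
noncomputable def remainderCoeff (q : ℝ) (k : ℕ) : ℝ :=
  (1 - (2 * k + 5) * q ^ (k + 1) / 3) / (2 * k + 5).factorial

/-- The quotient `(sin x / x - cosApprox p x) / x ^ 4` as a function of `q = p ^ 2` and `y = x ^ 2`.
Being defined by its power series, it takes the limiting value at `y = 0`. -/
noncomputable def remainder (q y : ℝ) : ℝ :=
  ∑' k : ℕ, (-1) ^ k * remainderCoeff q k * y ^ k

section Coefficients

variable {q : ℝ}

lemma mul_pow_le_seven_mul_sq (hq : 0 ≤ q) (hq_le : q ≤ 7 / 9) (k : ℕ) :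
    (2 * k + 7) * q ^ (k + 2) ≤ 7 * q ^ 2 := by
  induction k with
  | zero => simp
  | succ k ih =>
    have factor_le : (2 * ((k : ℝ) + 1) + 7) * q ≤ 2 * k + 7 := by
      nlinarith [k.cast_nonneg (α := ℝ)]
    calc (2 * ((k + 1 : ℕ) : ℝ) + 7) * q ^ (k + 1 + 2)
        = (2 * ((k : ℝ) + 1) + 7) * q * q ^ (k + 2) := by push_cast; ring
      _ ≤ (2 * k + 7) * q ^ (k + 2) := by gcongr
      _ ≤ 7 * q ^ 2 := ih

lemma remainderCoeff_le_inv_factorial (hq : 0 ≤ q) (k : ℕ) :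
    remainderCoeff q k ≤ 1 / (2 * k + 5).factorial := by
  unfold remainderCoeff
  gcongr
  exact sub_le_self _ (by positivity)

lemma le_remainderCoeff_succ (hq : 0 ≤ q) (hq_le : 7 * q ^ 2 ≤ 3) (k : ℕ) :
    (1 - 7 * q ^ 2 / 3) / (2 * k + 7).factorial ≤ remainderCoeff q (k + 1) := by
  have numerator_le := mul_pow_le_seven_mul_sq hq (by nlinarith) k
  unfold remainderCoeff
  rw [show 2 * (k + 1) + 5 = 2 * k + 7 by ring]
  refine div_le_div_of_nonneg_right ?_ (by positivity)
  push_cast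
  linear_combination numerator_le / 3

lemma remainderCoeff_succ_pos (hq : 0 ≤ q) (hq_lt : 7 * q ^ 2 < 3) (k : ℕ) :
    0 < remainderCoeff q (k + 1) :=
  (div_pos (by linarith) (by positivity)).trans_le (le_remainderCoeff_succ hq hq_lt.le k)

-- Up to bounding `1 - (2k+9) q^(k+3) / 3` by `1`, this is sharp at `k = 0`, where the ratio of the
-- factorials is `72` and the hypothesis on `R` reads `2 R ≤ 72 (1 - 7 q² / 3)`.
lemma two_mul_mul_remainderCoeff_le (hq : 0 ≤ q) {R : ℝ} (hR₀ : 0 ≤ R)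
    (hR : R ≤ 12 * (3 - 7 * q ^ 2)) (k : ℕ) :
    2 * R * remainderCoeff q (k + 2) ≤ remainderCoeff q (k + 1) := by
  have factorial_eq : ((2 * (k + 2) + 5).factorial : ℝ) =
      (2 * k + 9) * (2 * k + 8) * (2 * k + 7).factorial := by
    rw [show 2 * (k + 2) + 5 = 2 * k + 7 + 1 + 1 by ring, Nat.factorial_succ, Nat.factorial_succ]
    push_cast
    ring
  have le_product : (72 : ℝ) ≤ (2 * k + 9) * (2 * k + 8) := by
    nlinarith [k.cast_nonneg (α := ℝ)]
  calc 2 * R * remainderCoeff q (k + 2)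
      ≤ 2 * R * (1 / (2 * (k + 2) + 5).factorial) := by
        gcongr
        exact remainderCoeff_le_inv_factorial hq (k + 2)
    _ = 2 * R / ((2 * k + 9) * (2 * k + 8)) / (2 * k + 7).factorial := by
        rw [factorial_eq, mul_one_div, div_div]
    _ ≤ (1 - 7 * q ^ 2 / 3) / (2 * k + 7).factorial := by
        gcongr
        rw [div_le_iff₀ (by positivity)]
        nlinarith
    _ ≤ remainderCoeff q (k + 1) := le_remainderCoeff_succ hq (by linarith) k

end Coefficients

lemma strictAntiOn_remainder {q R : ℝ} (hq : 0 ≤ q) (hR₀ : 0 < R)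
    (hR : R ≤ 12 * (3 - 7 * q ^ 2)) : StrictAntiOn (remainder q) (Set.Icc 0 R) :=
  strictAntiOn_tsum_alternating_pow (remainderCoeff_succ_pos hq (by linarith))
    (two_mul_mul_remainderCoeff_le hq hR₀.le hR)

lemma remainder_zero (q : ℝ) : remainder q 0 = (3 - 5 * q) / 360 := by
  rw [remainder, tsum_eq_single 0 fun k hk ↦ by simp [hk]]
  norm_num [remainderCoeff, Nat.factorial]
  ring

lemma sin_term_sub_cos_term_eq {p x : ℝ} (hp : p ≠ 0) (hx : x ≠ 0) (k : ℕ) :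
    ((-1) ^ (k + 2) * x ^ (2 * (k + 2) + 1) / (2 * (k + 2) + 1).factorial / x -
        1 / (3 * p ^ 2) * ((-1) ^ (k + 2) * (p * x) ^ (2 * (k + 2)) / (2 * (k + 2)).factorial)) /
      x ^ 4 = (-1) ^ k * remainderCoeff (p ^ 2) k * (x ^ 2) ^ k := by
  have factorial_eq : ((2 * k + 5).factorial : ℝ) = (2 * k + 5) * (2 * (k + 2)).factorial := by
    rw [show 2 * k + 5 = 2 * (k + 2) + 1 by ring, Nat.factorial_succ]
    push_cast
    ring
  have factor_ne_zero : (2 * k + 5 : ℝ) ≠ 0 := by positivity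
  rw [remainderCoeff, show 2 * (k + 2) + 1 = 2 * k + 5 by ring, factorial_eq]
  field_simp
  ring

lemma remainder_sq_eq {p x : ℝ} (hp : p ≠ 0) (hx : x ≠ 0) :
    remainder (p ^ 2) (x ^ 2) = (sin x / x - cosApprox p x) / x ^ 4 := by
  have hasSum_sub := ((hasSum_sin x).div_const x).sub
    ((hasSum_cos (p * x)).mul_left (1 / (3 * p ^ 2)))
  have hasSum_tail := ((hasSum_nat_add_iff' 2).2 hasSum_sub).div_const (x ^ 4)
  simp only [sin_term_sub_cos_term_eq hp hx] at hasSum_tail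
  rw [remainder, hasSum_tail.tsum_eq, cosApprox]
  congr 1
  norm_num [Finset.sum_range_succ, Nat.factorial]
  field_simp
  ring

theorem stmt_13_general {p r x : ℝ} (hp : p ≠ 0) (hr : r ^ 2 ≤ 12 * (3 - 7 * p ^ 4))
    (hx : x ∈ Set.Ioo 0 r) :
    cosApprox p x + (r ^ 4)⁻¹ * (sin r / r - cosApprox p r) * x ^ 4 < sin x / x ∧
    sin x / x < cosApprox p x + (3 - 5 * p ^ 2) / 360 * x ^ 4 := by
  obtain ⟨hx₀, hxr⟩ := hx
  have hr₀ : 0 < r := hx₀.trans hxr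
  have hxr_sq : x ^ 2 < r ^ 2 := pow_lt_pow_left₀ hxr hx₀.le two_ne_zero
  have anti : StrictAntiOn (remainder (p ^ 2)) (Set.Icc 0 (r ^ 2)) :=
    strictAntiOn_remainder (sq_nonneg p) (by positivity) (by linear_combination hr)
  have lower := anti ⟨sq_nonneg x, hxr_sq.le⟩ ⟨sq_nonneg r, le_rfl⟩ hxr_sq
  have upper := anti ⟨le_rfl, sq_nonneg r⟩ ⟨sq_nonneg x, hxr_sq.le⟩ (by positivity)
  rw [remainder_sq_eq hp hx₀.ne', remainder_sq_eq hp hr₀.ne', div_eq_inv_mul _ (r ^ 4),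
    lt_div_iff₀ (by positivity)] at lower
  rw [remainder_sq_eq hp hx₀.ne', remainder_zero, div_lt_iff₀ (by positivity)] at upper
  constructor <;> linarith

lemma pi_div_two_sq_le {p : ℝ} (hp : p ∈ Set.Ioc 0 (√15 / 5)) :
    (π / 2) ^ 2 ≤ 12 * (3 - 7 * p ^ 4) := by
  have p_sq_le : p ^ 2 ≤ 3 / 5 := by
    calc p ^ 2 ≤ (√15 / 5) ^ 2 := pow_le_pow_left₀ hp.1.le hp.2 2
      _ = 3 / 5 := by rw [div_pow, sq_sqrt (by norm_num)]; norm_num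
  nlinarith [pi_lt_d2, pi_pos, sq_nonneg p]

/-- For `p ∈ (0, √15/5]`, with `c₀(p) = (π/2)⁻⁴·(2/π − ((1/(3p²))cos(pπ/2) + 1 − 1/(3p²)))`
and `c₁(p) = (3 − 5p²)/360`, for every `x ∈ (0, π/2)`:
`(1/(3p²))cos(px) + 1 − 1/(3p²) + c₀(p)x⁴ < sin x / x
 < (1/(3p²))cos(px) + 1 − 1/(3p²) + c₁(p)x⁴`. -/
theorem stmt_13 (p : ℝ) (hp : p ∈ Set.Ioc (0 : ℝ) (Real.sqrt 15 / 5))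
    (c₀ c₁ : ℝ)
    (hc₀ : c₀ = ((π / 2) ^ 4)⁻¹ *
      (2 / π - (1 / (3 * p ^ 2) * Real.cos (p * π / 2) + 1 - 1 / (3 * p ^ 2))))
    (hc₁ : c₁ = (3 - 5 * p ^ 2) / 360)
    (x : ℝ) (hx : x ∈ Set.Ioo (0 : ℝ) (π / 2)) :
    1 / (3 * p ^ 2) * Real.cos (p * x) + 1 - 1 / (3 * p ^ 2) + c₀ * x ^ 4 < Real.sin x / x ∧
    Real.sin x / x < 1 / (3 * p ^ 2) * Real.cos (p * x) + 1 - 1 / (3 * p ^ 2) + c₁ * x ^ 4 := by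
  have bounds := stmt_13_general hp.1.ne' (pi_div_two_sq_le hp) hx
  rwa [sin_pi_div_two, one_div_div, cosApprox, cosApprox, ← mul_div_assoc, ← hc₀, ← hc₁] at bounds
end

section
/- Define Si(t) = ∫₀ᵗ (sin x)/x dx. Then for every t ∈ (0, π/2), t − t³/18 + ((2π³ − 48π + 96)/(15π⁵))·t⁵ < Si(t) < t − t³/18 + t⁵/600, and also (9/8)·sin(2t/3) + t/4 + (2(16 − 5π)/(5π⁵))·t⁵ < Si(t) < (9/8)·sin(2t/3) + t/4 + (7/16200)·t⁵. -/
open Real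

/-!
The Taylor polynomials of `sin` at `0` lie alternately above and below `sin` on `(0, ∞)`: each
bound follows from the previous one by integrating twice. Dividing by `x` and integrating once more
shows that the Taylor polynomials of the sine integral `Si` bracket `Si` in the same way. Since
`9/8 * sin (2t/3) + t/4` also begins with `t - t³/18`, all four inequalities become comparisons of
the coefficients of `t⁵` in which the higher terms are small corrections; for `t < π/2` the two
lower bounds are then settled by decimal bounds on `π`.
-/

open Finset
open scoped Nat

/-- The Taylor polynomial of `cos` at `0` with `n` nonzero terms, of degree `2 * n - 2`. -/
noncomputable def cosTaylor (n : ℕ) (x : ℝ) : ℝ :=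
  ∑ k ∈ range n, (-1) ^ k * x ^ (2 * k) / (2 * k)!

/-- The Taylor polynomial of `sin` at `0` with `n` nonzero terms, of degree `2 * n - 1`. -/
noncomputable def sinTaylor (n : ℕ) (x : ℝ) : ℝ :=
  ∑ k ∈ range n, (-1) ^ k * x ^ (2 * k + 1) / (2 * k + 1)!

/-- The Taylor polynomial of the sine integral at `0` with `n` nonzero terms, of degree
`2 * n - 1`. -/
noncomputable def sineIntegralTaylor (n : ℕ) (x : ℝ) : ℝ :=
  ∑ k ∈ range n, (-1) ^ k * x ^ (2 * k + 1) / ((2 * k + 1) * (2 * k + 1)!)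

/-- The sine integral `Si`. The junk value `sin 0 / 0 = 0` of the integrand does not affect the
integral. -/
noncomputable def sineIntegral (t : ℝ) : ℝ :=
  ∫ x in (0 : ℝ)..t, sin x / x

theorem sineIntegral_eq_integral_sinc (t : ℝ) : sineIntegral t = ∫ x in (0 : ℝ)..t, sinc x := by
  refine intervalIntegral.integral_congr_ae ?_
  filter_upwards [MeasureTheory.Measure.ae_ne MeasureTheory.volume (0 : ℝ)] with x hx _
  exact (sinc_of_ne_zero hx).symm

theorem hasDerivAt_sineIntegral (x : ℝ) : HasDerivAt sineIntegral (sinc x) x := by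
  rw [funext sineIntegral_eq_integral_sinc]
  exact (continuous_sinc.integral_hasStrictDerivAt 0 x).hasDerivAt

theorem continuous_sineIntegral : Continuous sineIntegral :=
  continuous_iff_continuousAt.2 fun x ↦ (hasDerivAt_sineIntegral x).continuousAt

theorem sineIntegral_zero : sineIntegral 0 = 0 :=
  intervalIntegral.integral_same

section Taylor

variable (n : ℕ) (x : ℝ)

theorem cosTaylor_succ_zero : cosTaylor (n + 1) 0 = 1 := by
  simp [cosTaylor, sum_range_succ']

theorem sinTaylor_zero : sinTaylor n 0 = 0 := by
  simp [sinTaylor]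

theorem sineIntegralTaylor_zero : sineIntegralTaylor n 0 = 0 := by
  simp [sineIntegralTaylor]

theorem hasDerivAt_sinTaylor : HasDerivAt (sinTaylor n) (cosTaylor n x) x := by
  refine HasDerivAt.fun_sum fun k _ ↦ ?_
  refine (((hasDerivAt_pow (2 * k + 1) x).const_mul ((-1) ^ k)).div_const _).congr_deriv ?_
  rw [Nat.factorial_succ]
  push_cast
  field_simp

theorem hasDerivAt_cosTaylor_succ : HasDerivAt (cosTaylor (n + 1)) (-sinTaylor n x) x := by
  have split_constant_term : cosTaylor (n + 1) =
      fun y ↦ ∑ k ∈ range n, (-1 : ℝ) ^ (k + 1) * y ^ (2 * k + 2) / (2 * k + 2)! + 1 := by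
    ext y
    simp [cosTaylor, sum_range_succ', mul_add]
  rw [split_constant_term, sinTaylor, ← sum_neg_distrib]
  refine (HasDerivAt.fun_sum fun k _ ↦ ?_).add_const 1
  refine (((hasDerivAt_pow (2 * k + 2) x).const_mul ((-1) ^ (k + 1))).div_const _).congr_deriv ?_
  rw [Nat.factorial_succ (2 * k + 1)]
  push_cast
  field_simp
  ring

variable {x} in
theorem hasDerivAt_sineIntegralTaylor (hx : x ≠ 0) :
    HasDerivAt (sineIntegralTaylor n) (sinTaylor n x / x) x := by
  rw [sinTaylor, sum_div]
  refine HasDerivAt.fun_sum fun k _ ↦ ?_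
  refine (((hasDerivAt_pow (2 * k + 1) x).const_mul ((-1) ^ k)).div_const _).congr_deriv ?_
  push_cast
  field_simp
  exact (pow_succ x (2 * k)).symm

theorem continuous_sineIntegralTaylor : Continuous (sineIntegralTaylor n) := by
  unfold sineIntegralTaylor
  fun_prop

end Taylor

theorem pos_of_hasDerivAt_pos {f f' : ℝ → ℝ} (hf : Continuous f) (hf0 : f 0 = 0)
    (hderiv : ∀ x, 0 < x → HasDerivAt f (f' x) x) (hpos : ∀ x, 0 < x → 0 < f' x)
    {x : ℝ} (hx : 0 < x) : 0 < f x := by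
  have hmono : StrictMonoOn f (Set.Ici 0) := by
    refine strictMonoOn_of_deriv_pos (convex_Ici 0) hf.continuousOn fun y hy ↦ ?_
    rw [interior_Ici] at hy
    rw [(hderiv y hy).deriv]
    exact hpos y hy
  simpa only [hf0] using hmono Set.self_mem_Ici hx.le hx

theorem neg_one_pow_mul_cos_sub_cosTaylor_pos_of_sin {n : ℕ}
    (hsin : ∀ x, 0 < x → 0 < (-1) ^ n * (sin x - sinTaylor n x)) {x : ℝ} (hx : 0 < x) :
    0 < (-1) ^ (n + 1) * (cos x - cosTaylor (n + 1) x) := by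
  have hderiv (y : ℝ) :=
    ((hasDerivAt_cos y).fun_sub (hasDerivAt_cosTaylor_succ n y)).const_mul ((-1) ^ (n + 1))
  refine pos_of_hasDerivAt_pos (f := fun y ↦ (-1) ^ (n + 1) * (cos y - cosTaylor (n + 1) y))
    (continuous_iff_continuousAt.2 fun y ↦ (hderiv y).continuousAt)
    (by simp [cosTaylor_succ_zero]) (fun y _ ↦ hderiv y) (fun y hy ↦ ?_) hx
  linear_combination hsin y hy

theorem neg_one_pow_mul_sin_sub_sinTaylor_pos {n : ℕ} (hn : n ≠ 0) {x : ℝ} (hx : 0 < x) :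
    0 < (-1) ^ n * (sin x - sinTaylor n x) := by
  induction n, Nat.one_le_iff_ne_zero.2 hn using Nat.le_induction generalizing x with
  | base => simpa [sinTaylor] using sin_lt hx
  | succ n hn ih =>
    have hderiv (y : ℝ) :=
      ((hasDerivAt_sin y).fun_sub (hasDerivAt_sinTaylor (n + 1) y)).const_mul ((-1) ^ (n + 1))
    exact pos_of_hasDerivAt_pos (f := fun y ↦ (-1) ^ (n + 1) * (sin y - sinTaylor (n + 1) y))
      (continuous_iff_continuousAt.2 fun y ↦ (hderiv y).continuousAt)
      (by simp [sinTaylor_zero]) (fun y _ ↦ hderiv y)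
      (fun y hy ↦
        neg_one_pow_mul_cos_sub_cosTaylor_pos_of_sin (fun z hz ↦ ih (by lia) hz) hy) hx

theorem neg_one_pow_mul_sineIntegral_sub_sineIntegralTaylor_pos {n : ℕ} (hn : n ≠ 0) {x : ℝ}
    (hx : 0 < x) : 0 < (-1) ^ n * (sineIntegral x - sineIntegralTaylor n x) := by
  refine pos_of_hasDerivAt_pos (f := fun y ↦ (-1) ^ n * (sineIntegral y - sineIntegralTaylor n y))
    (continuous_const.mul (continuous_sineIntegral.sub (continuous_sineIntegralTaylor n)))
    (by simp [sineIntegral_zero, sineIntegralTaylor_zero])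
    (fun y hy ↦ ((hasDerivAt_sineIntegral y).fun_sub
      (hasDerivAt_sineIntegralTaylor n hy.ne')).const_mul ((-1) ^ n)) (fun y hy ↦ ?_) hx
  rw [sinc_of_ne_zero hy.ne', ← sub_div, ← mul_div_assoc]
  exact div_pos (neg_one_pow_mul_sin_sub_sinTaylor_pos hn hy) hy

section Bounds

variable {n : ℕ} {x : ℝ}

theorem sin_lt_sinTaylor_of_odd (hn : Odd n) (hx : 0 < x) : sin x < sinTaylor n x := by
  simpa [hn.neg_one_pow] using neg_one_pow_mul_sin_sub_sinTaylor_pos hn.pos.ne' hx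

theorem sinTaylor_lt_sin_of_even (hn : Even n) (hn0 : n ≠ 0) (hx : 0 < x) :
    sinTaylor n x < sin x := by
  simpa [hn.neg_one_pow] using neg_one_pow_mul_sin_sub_sinTaylor_pos hn0 hx

theorem sineIntegral_lt_sineIntegralTaylor_of_odd (hn : Odd n) (hx : 0 < x) :
    sineIntegral x < sineIntegralTaylor n x := by
  simpa [hn.neg_one_pow] using
    neg_one_pow_mul_sineIntegral_sub_sineIntegralTaylor_pos hn.pos.ne' hx

theorem sineIntegralTaylor_lt_sineIntegral_of_even (hn : Even n) (hn0 : n ≠ 0) (hx : 0 < x) :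
    sineIntegralTaylor n x < sineIntegral x := by
  simpa [hn.neg_one_pow] using neg_one_pow_mul_sineIntegral_sub_sineIntegralTaylor_pos hn0 hx

end Bounds

theorem sinTaylor_four (x : ℝ) :
    sinTaylor 4 x = x - x ^ 3 / 6 + x ^ 5 / 120 - x ^ 7 / 5040 := by
  simp only [sinTaylor, sum_range_succ, sum_range_zero, Nat.factorial]
  push_cast
  ring

theorem sinTaylor_five (x : ℝ) :
    sinTaylor 5 x = x - x ^ 3 / 6 + x ^ 5 / 120 - x ^ 7 / 5040 + x ^ 9 / 362880 := by
  simp only [sinTaylor, sum_range_succ, sum_range_zero, Nat.factorial]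
  push_cast
  ring

theorem sineIntegralTaylor_one (x : ℝ) : sineIntegralTaylor 1 x = x := by
  simp [sineIntegralTaylor]

theorem sineIntegralTaylor_three (x : ℝ) :
    sineIntegralTaylor 3 x = x - x ^ 3 / 18 + x ^ 5 / 600 := by
  simp only [sineIntegralTaylor, sum_range_succ, sum_range_zero, Nat.factorial]
  push_cast
  ring

theorem sineIntegralTaylor_four (x : ℝ) :
    sineIntegralTaylor 4 x = x - x ^ 3 / 18 + x ^ 5 / 600 - x ^ 7 / 35280 := by
  simp only [sineIntegralTaylor, sum_range_succ, sum_range_zero, Nat.factorial]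
  push_cast
  ring

theorem sineIntegralTaylor_five (x : ℝ) :
    sineIntegralTaylor 5 x =
      x - x ^ 3 / 18 + x ^ 5 / 600 - x ^ 7 / 35280 + x ^ 9 / 3265920 := by
  simp only [sineIntegralTaylor, sum_range_succ, sum_range_zero, Nat.factorial]
  push_cast
  ring

section Quintic

variable {c t : ℝ}

theorem sineIntegral_lt_quintic (ht : 0 < t) :
    sineIntegral t < t - t ^ 3 / 18 + t ^ 5 / 600 := by
  rw [← sineIntegralTaylor_three]
  exact sineIntegral_lt_sineIntegralTaylor_of_odd (by decide) ht

theorem quintic_lt_sineIntegral (ht : 0 < t) (hc : c + t ^ 2 / 35280 ≤ 1 / 600) :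
    t - t ^ 3 / 18 + c * t ^ 5 < sineIntegral t := by
  have hSi := sineIntegralTaylor_lt_sineIntegral_of_even (n := 4) (by decide) (by decide) ht
  rw [sineIntegralTaylor_four] at hSi
  have hcoeff := mul_le_mul_of_nonneg_right hc (pow_pos ht 5).le
  linarith

theorem sineIntegral_lt_sin_add_quintic (ht : 0 < t) :
    sineIntegral t < 9 / 8 * sin (2 * t / 3) + t / 4 + 7 / 16200 * t ^ 5 := by
  -- The Taylor bounds suffice as long as `t ^ 2 ≤ 3265920 * 131 / 8573040 = 49.9…`, where
  -- `131 / 8573040 = 1 / 35280 - 9 / 8 * (2 / 3) ^ 7 / 5040`; beyond that `Si t < t` is enough.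
  rcases le_total t 7 with ht7 | ht7
  · have hSi := sineIntegral_lt_sineIntegralTaylor_of_odd (n := 5) (by decide) ht
    have hsin := sinTaylor_lt_sin_of_even (n := 4) (x := 2 * t / 3) (by decide) (by decide)
      (by positivity)
    rw [sineIntegralTaylor_five] at hSi
    rw [sinTaylor_four] at hsin
    have hcoeff : t ^ 2 / 3265920 * t ^ 7 ≤ 131 / 8573040 * t ^ 7 := by
      refine mul_le_mul_of_nonneg_right ?_ (by positivity)
      nlinarith
    linarith
  · have hSi := sineIntegral_lt_sineIntegralTaylor_of_odd (n := 1) (by decide) ht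
    rw [sineIntegralTaylor_one] at hSi
    have hpow : 7 ^ 4 * t ≤ t ^ 5 := by
      rw [pow_succ t 4]
      gcongr
    linarith [neg_one_le_sin (2 * t / 3)]

-- The correction terms are the coefficients of `t ^ 7` and `t ^ 9` in the difference
-- `9 / 8 * sinTaylor 5 (2 * t / 3) + t / 4 - sineIntegralTaylor 4 t`.
theorem sin_add_quintic_lt_sineIntegral (ht : 0 < t)
    (hc : c + 131 / 8573040 * t ^ 2 + t ^ 4 / 12400290 ≤ 7 / 16200) :
    9 / 8 * sin (2 * t / 3) + t / 4 + c * t ^ 5 < sineIntegral t := by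
  have hSi := sineIntegralTaylor_lt_sineIntegral_of_even (n := 4) (by decide) (by decide) ht
  have hsin := sin_lt_sinTaylor_of_odd (n := 5) (x := 2 * t / 3) (by decide) (by positivity)
  rw [sineIntegralTaylor_four] at hSi
  rw [sinTaylor_five] at hsin
  have hcoeff := mul_le_mul_of_nonneg_right hc (pow_pos ht 5).le
  linarith

end Quintic

theorem lt_pi_pow_five : 305 < π ^ 5 :=
  calc
    (305 : ℝ) < 3.1415 ^ 5 := by norm_num
    _ < π ^ 5 := by gcongr; exact pi_gt_d4

theorem quintic_coeff_le : (2 * π ^ 3 - 48 * π + 96) / (15 * π ^ 5) ≤ 0.00159 := by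
  have hcube : π ^ 3 < 3.1416 ^ 3 := by gcongr; exact pi_lt_d4
  rw [div_le_iff₀ (by positivity)]
  linarith [lt_pi_pow_five, pi_gt_d4]

theorem sin_add_quintic_coeff_le : 2 * (16 - 5 * π) / (5 * π ^ 5) ≤ 0.00039 := by
  rw [div_le_iff₀ (by positivity)]
  linarith [lt_pi_pow_five, pi_gt_d4]

/-- With `Si t = ∫₀ᵗ (sin x)/x dx`, for every `t ∈ (0, π/2)`:
`t − t³/18 + ((2π³ − 48π + 96)/(15π⁵))t⁵ < Si t < t − t³/18 + t⁵/600` and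
`(9/8)sin(2t/3) + t/4 + (2(16 − 5π)/(5π⁵))t⁵ < Si t
 < (9/8)sin(2t/3) + t/4 + (7/16200)t⁵`. -/
theorem stmt_15 (t : ℝ) (ht : t ∈ Set.Ioo (0 : ℝ) (π / 2)) :
    (t - t ^ 3 / 18 + (2 * π ^ 3 - 48 * π + 96) / (15 * π ^ 5) * t ^ 5 <
        ∫ x in (0 : ℝ)..t, Real.sin x / x) ∧
    ((∫ x in (0 : ℝ)..t, Real.sin x / x) < t - t ^ 3 / 18 + t ^ 5 / 600) ∧
    (9 / 8 * Real.sin (2 * t / 3) + t / 4 + 2 * (16 - 5 * π) / (5 * π ^ 5) * t ^ 5 <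
        ∫ x in (0 : ℝ)..t, Real.sin x / x) ∧
    ((∫ x in (0 : ℝ)..t, Real.sin x / x) <
        9 / 8 * Real.sin (2 * t / 3) + t / 4 + 7 / 16200 * t ^ 5) := by
  obtain ⟨ht0, htπ⟩ := ht
  have ht2 : t ^ 2 ≤ 2.4675 := by nlinarith [pi_lt_d4]
  have ht4 : t ^ 4 ≤ 2.4675 ^ 2 := by
    rw [show t ^ 4 = (t ^ 2) ^ 2 by ring]
    gcongr
  exact ⟨quintic_lt_sineIntegral ht0 (by linarith [quintic_coeff_le]),
    sineIntegral_lt_quintic ht0,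
    sin_add_quintic_lt_sineIntegral ht0 (by linarith [sin_add_quintic_coeff_le]),
    sineIntegral_lt_sin_add_quintic ht0⟩
end

section
/- Let a, b > 0 with a ≠ b, let G = √(ab) be the geometric mean, A = (a+b)/2 the arithmetic mean, A_p = ((a^p + b^p)/2)^{1/p} the power mean of order p ≠ 0, and L = (a − b)/(ln a − ln b) the logarithmic mean. Then with p₁ = √15/5, the double inequality (5/9)·A_{p₁}^{p₁}·G^{1 − p₁} + (4/9)·G < L < (1/3)·A + (2/3)·G holds, and the constants p₁ = √15/5 and 1 are best possible (i.e., p₁ cannot be increased and the parameter 1 in the upper bound, coming from (1/(3q²))·A_q^q·G^{1−q} + (1 − 1/(3q²))·G with q = 1, cannot be decreased). -/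
open Real

/-!
Dividing by the geometric mean and writing `x = log (a / b) / 2` turns the comparison of means into
the comparison of `sinh x / x` with `cosh (p * x) / (3 * p ^ 2) + 1 - 1 / (3 * p ^ 2)`. The
normalisation makes both even power series start with `1 + x ^ 2 / 6`, and the `n`-th later
coefficient of their difference has the sign of `(2 * n + 5) * (p ^ 2) ^ (n + 1) - 3`. All of these
are nonpositive as soon as the one with `n = 0` is, i.e. for `p ^ 2 ≤ 3 / 5`, and all are positive
for `1 ≤ p ^ 2`. When `3 / 5 < p ^ 2` the term in `x ^ 4` decides the comparison near `0`; when
`p ^ 2 < 1` the growth `exp |p * x|` against `exp |x| / |x|` decides it at infinity.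
-/

open Filter Topology
open scoped Nat

/-- The logarithmic mean of two distinct positive reals; division by zero makes it `0` on the
diagonal. -/
noncomputable def logMean (a b : ℝ) : ℝ := (a - b) / (log a - log b)

/-- The combination `(1 / (3p²)) A_p^p G^(1-p) + (1 - 1 / (3p²)) G` of the power mean `A_p` of
order `p` and the geometric mean `G`, whose weights make it agree with the logarithmic mean to
second order near the diagonal. Meaningful for `p ≠ 0` and positive `a`, `b`. -/
noncomputable def powerGeomMean (p a b : ℝ) : ℝ :=
  1 / (3 * p ^ 2) * ((a ^ p + b ^ p) / 2) * √(a * b) ^ (1 - p) + (1 - 1 / (3 * p ^ 2)) * √(a * b)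

/-- The hyperbolic form of `powerGeomMean p`: its ratio to the geometric mean as a function of
`x = log (a / b) / 2`. -/
noncomputable def coshMean (p x : ℝ) : ℝ := 1 / (3 * p ^ 2) * cosh (p * x) + (1 - 1 / (3 * p ^ 2))

section Hyperbolic

variable {p x : ℝ}

lemma hasSum_sinh_div_self (hx : x ≠ 0) :
    HasSum (fun n : ℕ ↦ x ^ (2 * n) / (2 * n + 1)!) (sinh x / x) := by
  refine ((hasSum_sinh x).div_const x).congr_fun fun n ↦ ?_
  rw [pow_succ]
  field_simp

lemma hasSum_coshMean_sub_sinh_div_self (hp : p ≠ 0) (hx : x ≠ 0) :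
    HasSum (fun n : ℕ ↦
        ((2 * n + 5) * (p ^ 2) ^ (n + 1) - 3) * (x ^ (2 * (n + 2)) / (3 * (2 * n + 5)!)))
      (coshMean p x - sinh x / x) := by
  have series := ((hasSum_cosh (p * x)).mul_left (1 / (3 * p ^ 2))).sub (hasSum_sinh_div_self hx)
  have tail := (hasSum_nat_add_iff' 2).2 series
  convert! tail using 1
  · funext n
    have factorial_eq : ((2 * n + 5)! : ℝ) = (2 * n + 5) * (2 * (n + 2))! := by
      rw [show 2 * n + 5 = 2 * (n + 2) + 1 by ring, Nat.factorial_succ]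
      push_cast
      ring
    rw [show 2 * (n + 2) + 1 = 2 * n + 5 by ring, factorial_eq]
    field_simp
    ring
  · simp only [coshMean, Finset.sum_range_succ, Finset.sum_range_zero]
    norm_num [Nat.factorial]
    field_simp
    ring

lemma mul_three_fifths_pow_le_three (n : ℕ) : (2 * n + 5 : ℝ) * (3 / 5) ^ (n + 1) ≤ 3 := by
  induction n with
  | zero => norm_num
  | succ n ih =>
    calc (2 * (n + 1 : ℕ) + 5 : ℝ) * (3 / 5) ^ (n + 1 + 1)
        = (2 * n + 7) * (3 / 5) * (3 / 5) ^ (n + 1) := by push_cast; ring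
      _ ≤ (2 * n + 5) * (3 / 5) ^ (n + 1) := by gcongr; linarith [n.cast_nonneg (α := ℝ)]
      _ ≤ 3 := ih

lemma coshMean_lt_sinh_div_self (hp : p ≠ 0) (hp' : p ^ 2 ≤ 3 / 5) (hx : x ≠ 0) :
    coshMean p x < sinh x / x := by
  have coeff_nonpos (n : ℕ) : (2 * n + 5 : ℝ) * (p ^ 2) ^ (n + 1) - 3 ≤ 0 := by
    have : (2 * n + 5 : ℝ) * (p ^ 2) ^ (n + 1) ≤ (2 * n + 5) * (3 / 5) ^ (n + 1) := by gcongr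
    linarith [mul_three_fifths_pow_le_three n]
  have coeff_one_neg : (2 * (1 : ℕ) + 5 : ℝ) * (p ^ 2) ^ (1 + 1) - 3 < 0 := by
    have : (p ^ 2) ^ 2 ≤ (3 / 5) ^ 2 := by gcongr
    norm_num at this ⊢
    linarith
  refine sub_neg.1 (hasSum_lt (i := 1) (fun n ↦ ?_) ?_ (hasSum_coshMean_sub_sinh_div_self hp hx)
    hasSum_zero)
  · exact mul_nonpos_of_nonpos_of_nonneg (coeff_nonpos n) (by rw [pow_mul]; positivity)
  · exact mul_neg_of_neg_of_pos coeff_one_neg (by rw [pow_mul]; positivity)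

lemma sinh_div_self_lt_coshMean (hp : 1 ≤ p ^ 2) (hx : x ≠ 0) :
    sinh x / x < coshMean p x := by
  have hp₀ : p ≠ 0 := by rintro rfl; norm_num at hp
  have coeff_pos (n : ℕ) : 0 < (2 * n + 5 : ℝ) * (p ^ 2) ^ (n + 1) - 3 := by
    have : (2 * n + 5 : ℝ) ≤ (2 * n + 5) * (p ^ 2) ^ (n + 1) :=
      le_mul_of_one_le_right (by positivity) (one_le_pow₀ hp)
    linarith [n.cast_nonneg (α := ℝ)]
  have term_pos (n : ℕ) : 0 < ((2 * n + 5) * (p ^ 2) ^ (n + 1) - 3) *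
      (x ^ (2 * (n + 2)) / (3 * (2 * n + 5)!)) :=
    mul_pos (coeff_pos n) (by rw [pow_mul]; positivity)
  exact sub_pos.1 (hasSum_lt (i := 0) (fun n ↦ (term_pos n).le) (term_pos 0) hasSum_zero
    (hasSum_coshMean_sub_sinh_div_self hp₀ hx))

lemma le_coshMean_sub_sinh_div_self (hp : p ≠ 0) (hx : x ≠ 0) :
    x ^ 4 * (p ^ 2 / 72 - cosh x / 120) ≤ coshMean p x - sinh x / x := by
  have hasSum_minorant : HasSum
      (fun n : ℕ ↦ (if n = 0 then x ^ 4 * (p ^ 2 / 72) else 0) -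
        x ^ 4 / 120 * (x ^ (2 * n) / (2 * n)!))
      (x ^ 4 * (p ^ 2 / 72 - cosh x / 120)) := by
    convert! (hasSum_ite_eq 0 (x ^ 4 * (p ^ 2 / 72))).sub
      ((hasSum_cosh x).mul_left (x ^ 4 / 120)) using 1
    ring
  refine hasSum_le (fun n ↦ ?_) hasSum_minorant (hasSum_coshMean_sub_sinh_div_self hp hx)
  have factorial_le : ((2 * n)! * 120 : ℝ) ≤ (2 * n + 5)! := by
    exact_mod_cast Nat.le_of_dvd (Nat.factorial_pos _)
      (Nat.factorial_mul_factorial_dvd_factorial_add _ 5)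
  have sinh_term_le : x ^ (2 * (n + 2)) / (2 * n + 5)! ≤ x ^ 4 / 120 * (x ^ (2 * n) / (2 * n)!) :=
    calc x ^ (2 * (n + 2)) / (2 * n + 5)!
        ≤ x ^ (2 * (n + 2)) / ((2 * n)! * 120) := by
          gcongr
          rw [pow_mul]
          positivity
      _ = x ^ 4 / 120 * (x ^ (2 * n) / (2 * n)!) := by ring
  have cosh_term_le : (if n = 0 then x ^ 4 * (p ^ 2 / 72) else 0) ≤
      (2 * n + 5) * (p ^ 2) ^ (n + 1) * (x ^ (2 * (n + 2)) / (3 * (2 * n + 5)!)) := by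
    split_ifs with hn
    · subst hn
      norm_num [Nat.factorial]
      linarith
    · rw [pow_mul x]
      positivity
  calc _ ≤ (2 * n + 5) * (p ^ 2) ^ (n + 1) * (x ^ (2 * (n + 2)) / (3 * (2 * n + 5)!)) -
        x ^ (2 * (n + 2)) / (2 * n + 5)! := sub_le_sub cosh_term_le sinh_term_le
    _ = _ := by field_simp

lemma eventually_sinh_div_self_lt_coshMean (hp : 3 / 5 < p ^ 2) :
    ∀ᶠ x in 𝓝[≠] 0, sinh x / x < coshMean p x := by
  have hp₀ : p ≠ 0 := by rintro rfl; norm_num at hp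
  have cosh_lt : ∀ᶠ x in 𝓝[≠] 0, cosh x < 5 / 3 * p ^ 2 :=
    nhdsWithin_le_nhds <| continuous_cosh.tendsto 0 |>.eventually_lt_const <| by
      rw [cosh_zero]
      linarith
  filter_upwards [cosh_lt, self_mem_nhdsWithin] with x hcosh (hx : x ≠ 0)
  have minorant_pos : 0 < x ^ 4 * (p ^ 2 / 72 - cosh x / 120) :=
    mul_pos (by positivity) (by linarith)
  exact sub_pos.1 (minorant_pos.trans_le (le_coshMean_sub_sinh_div_self hp₀ hx))

lemma coshMean_le_mul_exp_abs (p x : ℝ) :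
    coshMean p x ≤ (1 / (3 * p ^ 2) + 1) * exp |p * x| := by
  have weight_nonneg : 0 ≤ 1 / (3 * p ^ 2) := by positivity
  have cosh_le : cosh (p * x) ≤ exp |p * x| := by
    rw [← cosh_abs, ← cosh_add_sinh]
    exact le_add_of_nonneg_right (sinh_nonneg_iff.2 (abs_nonneg _))
  have one_le : 1 ≤ exp |p * x| := one_le_exp (abs_nonneg _)
  calc coshMean p x ≤ 1 / (3 * p ^ 2) * exp |p * x| + 1 * exp |p * x| := by
        unfold coshMean
        gcongr
        linarith
    _ = (1 / (3 * p ^ 2) + 1) * exp |p * x| := by ring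

lemma exp_lt_four_mul_sinh (hx : 1 ≤ x) : exp x < 4 * sinh x := by
  have two_le_exp : 2 ≤ exp x := by linarith [add_one_le_exp x]
  have exp_neg_lt_one : exp (-x) < 1 := exp_lt_one_iff.2 (by linarith)
  rw [sinh_eq]
  linarith

lemma eventually_coshMean_lt_sinh_div_self (hp : p ^ 2 < 1) :
    ∀ᶠ x in atTop, coshMean p x < sinh x / x := by
  have gap_pos : 0 < 1 - |p| := sub_pos.2 ((sq_lt_one_iff_abs_lt_one p).1 hp)
  set C := 1 / (3 * p ^ 2) + 1
  have linear_le_exp : ∀ᶠ x : ℝ in atTop, 4 * C * x ≤ exp ((1 - |p|) * x) := by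
    filter_upwards [(isLittleO_pow_exp_pos_mul_atTop 1 gap_pos).bound
      (c := (4 * C)⁻¹) (by positivity)] with x hx
    rw [pow_one, norm_of_nonneg (exp_pos _).le, ← div_eq_inv_mul, le_div_iff₀' (by positivity)]
      at hx
    exact (mul_le_mul_of_nonneg_left (le_abs_self x) (by positivity)).trans hx
  filter_upwards [linear_le_exp, eventually_ge_atTop 1] with x hlinear hx
  have hx₀ : 0 < x := by linarith
  rw [lt_div_iff₀ hx₀, ← mul_lt_mul_iff_right₀ (four_pos (α := ℝ))]
  calc 4 * (coshMean p x * x) ≤ 4 * (C * exp |p * x| * x) := by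
        gcongr
        exact coshMean_le_mul_exp_abs p x
    _ = 4 * C * x * exp (|p| * x) := by rw [abs_mul, abs_of_pos hx₀]; ring
    _ ≤ exp ((1 - |p|) * x) * exp (|p| * x) := by gcongr
    _ = exp x := by rw [← exp_add]; ring_nf
    _ < 4 * sinh x := exp_lt_four_mul_sinh hx

theorem forall_coshMean_lt_sinh_div_self_iff (hp : p ≠ 0) :
    (∀ x ≠ 0, coshMean p x < sinh x / x) ↔ p ^ 2 ≤ 3 / 5 := by
  refine ⟨fun h ↦ ?_, fun hp' _ hx ↦ coshMean_lt_sinh_div_self hp hp' hx⟩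
  by_contra! hp'
  obtain ⟨x, hlt, hx⟩ :=
    ((eventually_sinh_div_self_lt_coshMean hp').and self_mem_nhdsWithin).exists
  exact hlt.asymm (h x hx)

theorem forall_sinh_div_self_lt_coshMean_iff :
    (∀ x ≠ 0, sinh x / x < coshMean p x) ↔ 1 ≤ p ^ 2 := by
  refine ⟨fun h ↦ ?_, fun hp _ hx ↦ sinh_div_self_lt_coshMean hp hx⟩
  by_contra! hp
  obtain ⟨x, hlt, hx⟩ :=
    ((eventually_coshMean_lt_sinh_div_self hp).and (eventually_ne_atTop 0)).exists
  exact hlt.asymm (h x hx)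

end Hyperbolic

section Means

variable {a b : ℝ}

lemma sqrt_mul_mul_exp_half_log_div (ha : 0 < a) (hb : 0 < b) :
    √(a * b) * exp (log (a / b) / 2) = a := by
  rw [exp_half, exp_log (div_pos ha hb), ← sqrt_mul (by positivity),
    show a * b * (a / b) = a ^ 2 by field_simp, sqrt_sq ha.le]

lemma sqrt_mul_mul_exp_neg_half_log_div (ha : 0 < a) (hb : 0 < b) :
    √(a * b) * exp (-(log (a / b) / 2)) = b := by
  rw [← neg_div, ← log_inv, inv_div, mul_comm a b, sqrt_mul_mul_exp_half_log_div hb ha]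

lemma logMean_eq_sqrt_mul (ha : 0 < a) (hb : 0 < b) :
    logMean a b = √(a * b) * (sinh (log (a / b) / 2) / (log (a / b) / 2)) := by
  have sub_eq : a - b = √(a * b) * (2 * sinh (log (a / b) / 2)) := by
    rw [sinh_eq]
    linear_combination -sqrt_mul_mul_exp_half_log_div ha hb +
      sqrt_mul_mul_exp_neg_half_log_div ha hb
  rw [logMean, ← log_div ha.ne' hb.ne', sub_eq]
  ring

lemma powerGeomMean_eq_sqrt_mul (p : ℝ) (ha : 0 < a) (hb : 0 < b) :
    powerGeomMean p a b = √(a * b) * coshMean p (log (a / b) / 2) := by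
  have sqrt_pos : 0 < √(a * b) := Real.sqrt_pos.2 (mul_pos ha hb)
  set g := √(a * b) with hg
  set x := log (a / b) / 2
  have rpow_a : a ^ p = g ^ p * exp (p * x) := by
    rw [← sqrt_mul_mul_exp_half_log_div ha hb, mul_rpow sqrt_pos.le (exp_pos _).le, ← exp_mul,
      mul_comm p]
  have rpow_b : b ^ p = g ^ p * exp (-(p * x)) := by
    rw [← sqrt_mul_mul_exp_neg_half_log_div ha hb, mul_rpow sqrt_pos.le (exp_pos _).le, ← exp_mul,
      neg_mul, mul_comm p]
  have rpow_mul_rpow : g ^ p * g ^ (1 - p) = g := by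
    rw [← rpow_add sqrt_pos, add_sub_cancel, rpow_one]
  rw [powerGeomMean, coshMean, ← hg, rpow_a, rpow_b, cosh_eq]
  linear_combination 1 / (3 * p ^ 2) * ((exp (p * x) + exp (-(p * x))) / 2) * rpow_mul_rpow

lemma forall_half_log_div_iff {P : ℝ → Prop} :
    (∀ a b : ℝ, 0 < a → 0 < b → a ≠ b → P (log (a / b) / 2)) ↔ ∀ x ≠ 0, P x := by
  refine ⟨fun h x hx ↦ ?_, fun h a b ha hb hab ↦ h _ ?_⟩
  · simpa [hx] using h (exp (2 * x)) 1 (exp_pos _) one_pos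
  · have div_ne_one : a / b ≠ 1 := by rwa [ne_eq, div_eq_one_iff_eq hb.ne']
    exact div_ne_zero (log_ne_zero_of_pos_of_ne_one (div_pos ha hb) div_ne_one) two_ne_zero

lemma powerGeomMean_lt_logMean_iff (p : ℝ) (ha : 0 < a) (hb : 0 < b) :
    powerGeomMean p a b < logMean a b ↔
      coshMean p (log (a / b) / 2) < sinh (log (a / b) / 2) / (log (a / b) / 2) := by
  rw [powerGeomMean_eq_sqrt_mul p ha hb, logMean_eq_sqrt_mul ha hb,
    mul_lt_mul_iff_right₀ (Real.sqrt_pos.2 (mul_pos ha hb))]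

lemma logMean_lt_powerGeomMean_iff (p : ℝ) (ha : 0 < a) (hb : 0 < b) :
    logMean a b < powerGeomMean p a b ↔
      sinh (log (a / b) / 2) / (log (a / b) / 2) < coshMean p (log (a / b) / 2) := by
  rw [powerGeomMean_eq_sqrt_mul p ha hb, logMean_eq_sqrt_mul ha hb,
    mul_lt_mul_iff_right₀ (Real.sqrt_pos.2 (mul_pos ha hb))]

lemma powerGeomMean_one (a b : ℝ) :
    powerGeomMean 1 a b = 1 / 3 * ((a + b) / 2) + 2 / 3 * √(a * b) := by
  norm_num [powerGeomMean]

lemma sqrt_fifteen_div_five_sq : (√15 / 5) ^ 2 = 3 / 5 := by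
  rw [div_pow, sq_sqrt (by norm_num)]
  norm_num

lemma powerGeomMean_sqrt_fifteen_div_five (a b : ℝ) :
    powerGeomMean (√15 / 5) a b =
      5 / 9 * ((a ^ (√15 / 5) + b ^ (√15 / 5)) / 2) * √(a * b) ^ (1 - √15 / 5) +
        4 / 9 * √(a * b) := by
  rw [powerGeomMean, sqrt_fifteen_div_five_sq]
  norm_num

end Means

theorem stmt_19_general {p : ℝ} (hp : p ≠ 0) :
    ((∀ a b : ℝ, 0 < a → 0 < b → a ≠ b → powerGeomMean p a b < logMean a b) ↔ p ^ 2 ≤ 3 / 5) ∧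
    ((∀ a b : ℝ, 0 < a → 0 < b → a ≠ b → logMean a b < powerGeomMean p a b) ↔ 1 ≤ p ^ 2) := by
  rw [← forall_coshMean_lt_sinh_div_self_iff hp, ← forall_sinh_div_self_lt_coshMean_iff,
    ← forall_half_log_div_iff, ← forall_half_log_div_iff]
  simp +contextual only [powerGeomMean_lt_logMean_iff, logMean_lt_powerGeomMean_iff, and_self]

/-- For `a, b > 0`, `a ≠ b`, with `G = √(ab)`, `A = (a+b)/2`,
`A_p^p = (a^p + b^p)/2` and `L = (a − b)/(ln a − ln b)`, and `p₁ = √15/5`: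
`(5/9)·A_{p₁}^{p₁}·G^{1−p₁} + (4/9)·G < L < (1/3)·A + (2/3)·G`,
where `p₁ = √15/5` and `1` are the best possible constants in the family of
bounds `(1/(3p²))·A_p^p·G^{1−p} + (1 − 1/(3p²))·G`. -/
theorem stmt_19 :
    (∀ a b : ℝ, 0 < a → 0 < b → a ≠ b →
      5 / 9 * ((a ^ (Real.sqrt 15 / 5) + b ^ (Real.sqrt 15 / 5)) / 2) *
            Real.sqrt (a * b) ^ (1 - Real.sqrt 15 / 5) +
          4 / 9 * Real.sqrt (a * b) <
        (a - b) / (Real.log a - Real.log b) ∧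
      (a - b) / (Real.log a - Real.log b) <
        1 / 3 * ((a + b) / 2) + 2 / 3 * Real.sqrt (a * b)) ∧
    (∀ p : ℝ, Real.sqrt 15 / 5 < p →
      ¬ ∀ a b : ℝ, 0 < a → 0 < b → a ≠ b →
        1 / (3 * p ^ 2) * ((a ^ p + b ^ p) / 2) * Real.sqrt (a * b) ^ (1 - p) +
            (1 - 1 / (3 * p ^ 2)) * Real.sqrt (a * b) <
          (a - b) / (Real.log a - Real.log b)) ∧
    (∀ q : ℝ, 0 < q → q < 1 →
      ¬ ∀ a b : ℝ, 0 < a → 0 < b → a ≠ b →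
        (a - b) / (Real.log a - Real.log b) <
          1 / (3 * q ^ 2) * ((a ^ q + b ^ q) / 2) * Real.sqrt (a * b) ^ (1 - q) +
            (1 - 1 / (3 * q ^ 2)) * Real.sqrt (a * b)) := by
  have p₁_pos : 0 < √15 / 5 := by positivity
  refine ⟨fun a b ha hb hab ↦ ⟨?_, ?_⟩, fun p hp h ↦ ?_, fun q hq hq' h ↦ ?_⟩
  · rw [← powerGeomMean_sqrt_fifteen_div_five]
    exact (stmt_19_general p₁_pos.ne').1.2 sqrt_fifteen_div_five_sq.le a b ha hb hab
  · rw [← powerGeomMean_one]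
    exact (stmt_19_general one_ne_zero).2.2 (one_pow 2).ge a b ha hb hab
  · have sq_lt : 3 / 5 < p ^ 2 :=
      sqrt_fifteen_div_five_sq ▸ pow_lt_pow_left₀ hp p₁_pos.le two_ne_zero
    exact sq_lt.not_ge ((stmt_19_general (p₁_pos.trans hp).ne').1.1 h)
  · exact (pow_lt_one₀ hq.le hq' two_ne_zero).not_ge ((stmt_19_general hq.ne').2.1 h)
end
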